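/- arXiv:quant-ph/0410107 — 6 statements merged into one kernel-verified Lean document; each statement's English description precedes it below -/
import Mathlib

section
/- (Decoupling with orthogonal arrays.) Let M = (g_{kj}) be an n×N array with entries in Z_d × Z_d that is an orthogonal array of strength t and multiplicity λ, and for each column j let W_j = ⊗_{k∈Fin n} U_{g_{kj}}. Then for every injective map κ : Fin t → Fin n and every traceless d^t×d^t complex matrix X, (1/N) ∑_{j=1}^{N} W_j^* X^{(κ)} W_j = 0. -/
/-!
Conjugating by a column of the array is explicit in the standard basis. Writing `g k = (a k, b k)`
and `ω = exp(2πi/d)`, the `(x, y)` entry of `W^* X^{(κ)} W` is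
`∏ k, conj(ω^(b k * x k)) * ω^(b k * y k)` times the `(x - a, y - a)` entry of `X^{(κ)}`
(`conj_entry`). It vanishes unless `x` and `y` agree off the range of `κ`, and then the factors
with `k` outside that range are `1`; what is left depends only on the `t` rows selected by `κ`
(`conj_embed_entry`). The orthogonal array property turns the sum over columns into `lam` times the
sum over all `g : Fin t → ZMod d × ZMod d` (`sum_columns`). That sum is the full Weyl–Heisenberg
twirl of `X` (`twirl_eq_zero`): off the diagonal it vanishes since the sum over `b` is a product of
geometric sums of roots of unity, one of which is nontrivial; on the diagonal it is a multiple of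
the trace of `X`.
-/

open scoped BigOperators Matrix Classical

/-- The cyclic-shift matrix `S = ∑_k |k⟩⟨k+1 mod d|`. -/
noncomputable def shiftMat (d : ℕ) : Matrix (Fin d) (Fin d) ℂ :=
  Matrix.of fun k l => if (l : ℕ) = ((k : ℕ) + 1) % d then 1 else 0

/-- The clock matrix `T = ∑_k ω^k |k⟩⟨k|` with `ω = exp(2πi/d)`. -/
noncomputable def clockMat (d : ℕ) : Matrix (Fin d) (Fin d) ℂ :=
  Matrix.of fun k l =>
    if k = l then Complex.exp (2 * Real.pi * Complex.I / d) ^ (k : ℕ) else 0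

/-- `U_g = S^a T^b` for `g = (a, b) ∈ Z_d × Z_d`. -/
noncomputable def Umat (d : ℕ) (g : ZMod d × ZMod d) : Matrix (Fin d) (Fin d) ℂ :=
  shiftMat d ^ g.1.val * clockMat d ^ g.2.val

/-- Tensor product `⊗V` of a family of `d × d` matrices, with rows and columns
indexed by functions `Fin n → Fin d`. -/
noncomputable def tensorProd {n d : ℕ} (V : Fin n → Matrix (Fin d) (Fin d) ℂ) :
    Matrix (Fin n → Fin d) (Fin n → Fin d) ℂ :=
  Matrix.of fun x y => ∏ i, V i (x i) (y i)

/-- The embedding `X^{(κ)}` of a `d^t × d^t` matrix `X` into the `n`-fold tensor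
product, acting on the qudits selected by `κ` and trivially elsewhere. -/
noncomputable def embed {t n d : ℕ} (κ : Fin t → Fin n)
    (X : Matrix (Fin t → Fin d) (Fin t → Fin d) ℂ) :
    Matrix (Fin n → Fin d) (Fin n → Fin d) ℂ :=
  Matrix.of fun x y =>
    if ∀ i : Fin n, i ∉ Set.range κ → x i = y i then X (x ∘ κ) (y ∘ κ) else 0

/-- The root of unity `ω = exp(2πi/d)`. -/
noncomputable def rootU (d : ℕ) : ℂ := Complex.exp (2 * Real.pi * Complex.I / d)

/-- Residues modulo `d` as elements of `Fin d`, the index type of the matrices. -/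
def toFin (d : ℕ) [NeZero d] : ZMod d ≃ Fin d := (ZMod.finEquiv d).symm.toEquiv

lemma toFin_val (d : ℕ) [NeZero d] (a : ZMod d) : ((toFin d a : Fin d) : ℕ) = a.val := by
  cases d with
  | zero => exact absurd rfl (NeZero.ne 0)
  | succ d => rfl

lemma shiftMat_pow_apply (d m : ℕ) (u x : Fin d) :
    (shiftMat d ^ m) u x = if (x : ℕ) = ((u : ℕ) + m) % d then 1 else 0 := by
  induction m generalizing x with
  | zero =>
    simp [Matrix.one_apply, Nat.mod_eq_of_lt u.2, Fin.ext_iff, eq_comm]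
  | succ m ih =>
    have hd : 0 < d := u.pos
    rw [pow_succ, Matrix.mul_apply,
      Finset.sum_eq_single (⟨((u : ℕ) + m) % d, Nat.mod_lt _ hd⟩ : Fin d)]
    · rw [ih]
      simp [shiftMat, add_assoc]
    · intro z _ hz
      rw [ih, if_neg, zero_mul]
      exact fun h => hz (Fin.ext h)
    · simp

lemma clockMat_eq_diagonal (d : ℕ) :
    clockMat d = Matrix.diagonal fun k : Fin d => rootU d ^ (k : ℕ) := by
  ext k l
  simp [clockMat, Matrix.diagonal_apply, rootU]

lemma Umat_apply (d : ℕ) [NeZero d] (g : ZMod d × ZMod d) (u x : Fin d) :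
    Umat d g u x = if u = x - toFin d g.1 then rootU d ^ ((x : ℕ) * g.2.val) else 0 := by
  have h : ((x : ℕ) = ((u : ℕ) + g.1.val) % d) ↔ u = x - toFin d g.1 := by
    rw [eq_sub_iff_add_eq, Fin.ext_iff, Fin.val_add, toFin_val, eq_comm]
  rw [Umat, clockMat_eq_diagonal, Matrix.diagonal_pow, Matrix.mul_diagonal, shiftMat_pow_apply]
  simp only [h, Pi.pow_apply, ← pow_mul, ite_mul, one_mul, zero_mul]

lemma tensorProd_Umat_apply {n d : ℕ} [NeZero d] (g : Fin n → ZMod d × ZMod d)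
    (u x : Fin n → Fin d) :
    tensorProd (fun k => Umat d (g k)) u x =
      if u = (fun k => x k - toFin d (g k).1) then
        ∏ k, rootU d ^ ((x k : ℕ) * (g k).2.val) else 0 := by
  simp only [tensorProd, Matrix.of_apply, Umat_apply, Finset.prod_ite_zero, funext_iff,
    Finset.mem_univ, true_imp_iff]

/-- The phase `conj(ω^(x b)) ω^(y b)` picked up by the `(x, y)` entry under conjugation. -/
noncomputable def phase (d : ℕ) (x y : Fin d) (b : ZMod d) : ℂ :=
  star (rootU d ^ ((x : ℕ) * b.val)) * rootU d ^ ((y : ℕ) * b.val)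

lemma conj_entry {n d : ℕ} [NeZero d] (g : Fin n → ZMod d × ZMod d)
    (Y : Matrix (Fin n → Fin d) (Fin n → Fin d) ℂ) (x y : Fin n → Fin d) :
    ((tensorProd (fun k => Umat d (g k)))ᴴ * Y * tensorProd (fun k => Umat d (g k))) x y =
      (∏ k, phase d (x k) (y k) (g k).2) *
        Y (fun k => x k - toFin d (g k).1) (fun k => y k - toFin d (g k).1) := by
  simp only [Matrix.mul_apply, Matrix.conjTranspose_apply, tensorProd_Umat_apply, apply_ite star,
    star_zero, ite_mul, mul_ite, zero_mul, mul_zero, Finset.sum_ite_eq',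
    Finset.mem_univ, if_true, phase, Finset.prod_mul_distrib, star_prod]
  ring

lemma norm_rootU (d : ℕ) : ‖rootU d‖ = 1 := by
  have : (2 * Real.pi * Complex.I / d : ℂ) = ((2 * Real.pi / d : ℝ) : ℂ) * Complex.I := by
    push_cast; ring
  rw [rootU, this, Complex.norm_exp_ofReal_mul_I]

lemma star_rootU_pow_mul (d m : ℕ) : star (rootU d ^ m) * rootU d ^ m = 1 := by
  have h := Complex.conj_mul' (rootU d ^ m)
  simpa [norm_rootU] using h

lemma phase_self (d : ℕ) (x : Fin d) (b : ZMod d) : phase d x x b = 1 :=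
  star_rootU_pow_mul d _

lemma sum_phase_eq_zero (d : ℕ) [NeZero d] {x y : Fin d} (h : x ≠ y) :
    ∑ b : ZMod d, phase d x y b = 0 := by
  have hω : IsPrimitiveRoot (rootU d) d := Complex.isPrimitiveRoot_exp d (NeZero.ne d)
  set ζ : ℂ := star (rootU d ^ (x : ℕ)) * rootU d ^ (y : ℕ) with hζ
  have h1 : ζ ≠ 1 := by
    intro h1
    have h2 : rootU d ^ (y : ℕ) = rootU d ^ (x : ℕ) := by
      have h3 := star_rootU_pow_mul d x
      calc rootU d ^ (y : ℕ)
          = (star (rootU d ^ (x : ℕ)) * rootU d ^ (x : ℕ)) * rootU d ^ (y : ℕ) := by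
            rw [h3, one_mul]
        _ = rootU d ^ (x : ℕ) * ζ := by rw [hζ]; ring
        _ = _ := by rw [h1, mul_one]
    exact h (Fin.ext (hω.pow_inj x.2 y.2 h2.symm))
  have hd1 : ζ ^ d = 1 := by
    rw [hζ, mul_pow, ← star_pow, ← pow_mul, ← pow_mul, mul_comm (x : ℕ), mul_comm (y : ℕ),
      pow_mul, pow_mul, hω.pow_eq_one]
    simp
  have hp : ∀ b : ZMod d, phase d x y b = ζ ^ ((toFin d b : Fin d) : ℕ) := by
    intro b
    rw [toFin_val, phase, hζ, mul_pow, ← star_pow, ← pow_mul, ← pow_mul]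
  simp only [hp]
  rw [(toFin d).sum_comp fun k => ζ ^ (k : ℕ), Fin.sum_univ_eq_sum_range fun k => ζ ^ k,
    geom_sum_eq h1, hd1, sub_self, zero_div]

/-- Conjugation by the whole Weyl–Heisenberg group annihilates traceless matrices. -/
lemma twirl_eq_zero {t d : ℕ} [NeZero d] (X : Matrix (Fin t → Fin d) (Fin t → Fin d) ℂ)
    (hX : X.trace = 0) (x y : Fin t → Fin d) :
    ∑ g : Fin t → ZMod d × ZMod d, (∏ i, phase d (x i) (y i) (g i).2) *
      X (fun i => x i - toFin d (g i).1) (fun i => y i - toFin d (g i).1) = 0 := by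
  rw [← (Equiv.arrowProdEquivProdArrow (Fin t) (fun _ => ZMod d) (fun _ => ZMod d)).symm.sum_comp,
    Fintype.sum_prod_type]
  simp only [Equiv.arrowProdEquivProdArrow, Equiv.coe_fn_symm_mk]
  by_cases hxy : x = y
  · subst hxy
    rw [Finset.sum_comm]
    refine Finset.sum_eq_zero fun b _ => ?_
    simp only [phase_self, Finset.prod_const_one, one_mul]
    have key := (Equiv.piCongrRight fun i => (toFin d).trans (Equiv.subLeft (x i))).sum_comp
      fun z => X z z
    exact key.trans hX
  · obtain ⟨i, hi⟩ := Function.ne_iff.mp hxy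
    refine Finset.sum_eq_zero fun a _ => ?_
    rw [← Finset.sum_mul]
    have hprod : ∑ b : Fin t → ZMod d, ∏ i, phase d (x i) (y i) (b i) = 0 := by
      rw [← Fintype.prod_sum]
      exact Finset.prod_eq_zero (Finset.mem_univ i) (sum_phase_eq_zero d hi)
    rw [hprod, zero_mul]

lemma conj_embed_entry {n t d : ℕ} [NeZero d] (g : Fin n → ZMod d × ZMod d)
    (κ : Fin t → Fin n) (hκ : Function.Injective κ)
    (X : Matrix (Fin t → Fin d) (Fin t → Fin d) ℂ) (x y : Fin n → Fin d) :
    ((tensorProd (fun k => Umat d (g k)))ᴴ * embed κ X *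
        tensorProd (fun k => Umat d (g k))) x y =
      if ∀ i : Fin n, i ∉ Set.range κ → x i = y i then
        (∏ i, phase d (x (κ i)) (y (κ i)) (g (κ i)).2) *
          X (fun i => x (κ i) - toFin d (g (κ i)).1) (fun i => y (κ i) - toFin d (g (κ i)).1)
      else 0 := by
  rw [conj_entry]
  simp only [embed, Matrix.of_apply, sub_left_inj]
  split_ifs with h
  · congr 1
    refine (Fintype.prod_of_injective κ hκ _ _ (fun i hi => ?_) fun i => rfl).symm
    rw [h i hi, phase_self]
  · rw [mul_zero]

/-- The array property, stated for increasing choices of rows, holds for any choice of distinct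
rows in any order. -/
lemma card_columns {n N t lam : ℕ} {A : Type*} (M : Fin n → Fin N → A)
    (hOA : ∀ κ' : Fin t → Fin n, StrictMono κ' →
      ∀ a : Fin t → A, Nat.card {j : Fin N // ∀ i, M (κ' i) j = a i} = lam)
    (κ : Fin t → Fin n) (hκ : Function.Injective κ) (a : Fin t → A) :
    Nat.card {j : Fin N // ∀ i, M (κ i) j = a i} = lam := by
  rw [← hOA (κ ∘ Tuple.sort κ) ((Tuple.monotone_sort κ).strictMono_of_injective
    (hκ.comp (Tuple.sort κ).injective)) (a ∘ Tuple.sort κ)]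
  refine Nat.card_congr (Equiv.subtypeEquivRight fun j => ?_)
  exact ((Tuple.sort κ).forall_congr_right (q := fun i => M (κ i) j = a i)).symm

lemma sum_columns {n N t lam : ℕ} {A : Type*} [Fintype A] (M : Fin n → Fin N → A)
    (hOA : ∀ κ' : Fin t → Fin n, StrictMono κ' →
      ∀ a : Fin t → A, Nat.card {j : Fin N // ∀ i, M (κ' i) j = a i} = lam)
    (κ : Fin t → Fin n) (hκ : Function.Injective κ) (F : (Fin t → A) → ℂ) :
    ∑ j : Fin N, F (fun i => M (κ i) j) = lam * ∑ a, F a := by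
  rw [← Finset.sum_fiberwise Finset.univ (fun j i => M (κ i) j), Finset.mul_sum]
  refine Finset.sum_congr rfl fun a _ => ?_
  rw [Finset.sum_congr rfl (g := fun _ => F a) fun j hj => by rw [(Finset.mem_filter.mp hj).2],
    Finset.sum_const, nsmul_eq_mul, ← card_columns M hOA κ hκ a, Nat.card_eq_fintype_card,
    Fintype.card_subtype]
  simp only [funext_iff]

/-- Decoupling with orthogonal arrays (bang-bang controls). -/
theorem decoupling_with_orthogonal_arrays (d n N t lam : ℕ) [NeZero d] (hd : 1 ≤ d)
    (hlam : 1 ≤ lam)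
    (M : Fin n → Fin N → ZMod d × ZMod d)
    (hOA : ∀ κ' : Fin t → Fin n, StrictMono κ' →
      ∀ a : Fin t → ZMod d × ZMod d,
        Nat.card {j : Fin N // ∀ i, M (κ' i) j = a i} = lam)
    (κ : Fin t → Fin n) (hκ : Function.Injective κ)
    (X : Matrix (Fin t → Fin d) (Fin t → Fin d) ℂ) (hX : X.trace = 0) :
    (1 / (N : ℂ)) •
        ∑ j : Fin N,
          (tensorProd (fun k => Umat d (M k j)))ᴴ * embed κ X *
            tensorProd (fun k => Umat d (M k j)) = 0 := by
  ext x y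
  rw [Matrix.smul_apply, Matrix.sum_apply, Matrix.zero_apply]
  simp only [conj_embed_entry _ κ hκ]
  split_ifs with h
  · rw [sum_columns M hOA κ hκ fun g => (∏ i, phase d (x (κ i)) (y (κ i)) (g i).2) *
        X (fun i => x (κ i) - toFin d (g i).1) (fun i => y (κ i) - toFin d (g i).1),
      twirl_eq_zero X hX (fun i => x (κ i)) (fun i => y (κ i)), mul_zero, smul_zero]
  · simp
end

section
/- (Eulerian decoupling.) Let G be a finite group, ρ a unitary representation of G on ℂ^d, S ⊆ G, and (g_j)_{j∈Z_N} an Eulerian cycle of multiplicity λ in the Cayley graph Γ(G,S) with g_0 = 1 (so N = λ|G||S|). Set s_j = g_j g_{j−1}^{-1} for j = 1,…,N. Fix Δ > 0 and for each s ∈ S a continuous map u_s : [0,Δ] → M_d(ℂ) such that for every δ ∈ [0,Δ] the matrix u_s(δ) is unitary and lies in the ℂ-linear span of {ρ(g) : g ∈ G}, with u_s(0) = I_d and u_s(Δ) = ρ(s). Define the control propagator U_c on [0, NΔ) by U_c((j−1)Δ + δ) = u_{s_j}(δ) ρ(g_{j−1}) for δ ∈ [0,Δ) and j = 1,…,N.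 Then for every d×d complex matrix X, (1/(NΔ)) ∫_0^{NΔ} U_c(τ)^* X U_c(τ) dτ = (1/|G|) ∑_{g∈G} ρ(g)^* X ρ(g). -/
/-!
Write `T M = ∑ h, ρ(h)ᴴ M ρ(h)` for the unnormalized twirl over the group. Reindexing the sum shows
`T (A ρ(k)) = T (ρ(k) A)`, so by linearity `T (A w) = T (w A)` for every `w` in the span of the
`ρ(k)` (`twirl_mul_comm`). For a unitary `w` in that span, `T (wᴴ X w) = T (w wᴴ X) = T X`
(`twirl_conj`).

Cutting `[0, NΔ]` at the multiples of `Δ` and translating each piece back to `[0, Δ]` turns the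
time integral into `∫₀^Δ` of a sum over the steps of the cycle (`integral_pieces`). Each pair `(h, s)` occurs exactly
`lam` times among the steps (`sum_cycle`), so at time `δ` this sum is
`lam • ∑ s ∈ S, T (u_s(δ)ᴴ X u_s(δ)) = (lam * |S|) • T X`, independently of `δ`. Integrating over
`[0, Δ]` and dividing by `N Δ = lam |G| |S| Δ` leaves `T X / |G|`. Continuity of the controls
matters only for integrability of the integrand.
-/

open scoped BigOperators Matrix

attribute [local instance] Matrix.normedAddCommGroup Matrix.normedSpace

/-- The unnormalized twirl `M ↦ ∑ h, ρ(h)ᴴ M ρ(h)`, as a linear map. -/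
def twirl {d : ℕ} {G : Type*} [Group G] [Fintype G] (ρ : G →* Matrix.unitaryGroup (Fin d) ℂ) :
    Matrix (Fin d) (Fin d) ℂ →ₗ[ℂ] Matrix (Fin d) (Fin d) ℂ where
  toFun M := ∑ h : G, (ρ h : Matrix (Fin d) (Fin d) ℂ)ᴴ * M * (ρ h : Matrix (Fin d) (Fin d) ℂ)
  map_add' A B := by simp [mul_add, add_mul, Finset.sum_add_distrib]
  map_smul' c A := by simp [Finset.smul_sum]

theorem twirl_apply {d : ℕ} {G : Type*} [Group G] [Fintype G]
    (ρ : G →* Matrix.unitaryGroup (Fin d) ℂ) (M : Matrix (Fin d) (Fin d) ℂ) :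
    twirl ρ M =
      ∑ h : G, (ρ h : Matrix (Fin d) (Fin d) ℂ)ᴴ * M * (ρ h : Matrix (Fin d) (Fin d) ℂ) := rfl

/-- The twirl has the trace property with respect to the algebra spanned by the representation. -/
theorem twirl_mul_comm {d : ℕ} {G : Type*} [Group G] [Fintype G]
    (ρ : G →* Matrix.unitaryGroup (Fin d) ℂ) (A w : Matrix (Fin d) (Fin d) ℂ)
    (hw : w ∈ Submodule.span ℂ (Set.range fun h : G => (ρ h : Matrix (Fin d) (Fin d) ℂ))) :
    twirl ρ (A * w) = twirl ρ (w * A) := by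
  induction hw using Submodule.span_induction with
  | zero => simp
  | add x y _ _ hx hy => rw [mul_add, add_mul, map_add, map_add, hx, hy]
  | smul c x _ hx => rw [mul_smul_comm, smul_mul_assoc, map_smul, map_smul, hx]
  | mem x hx =>
    obtain ⟨k, rfl⟩ := hx
    simp only [twirl_apply]
    have hk : (ρ k : Matrix (Fin d) (Fin d) ℂ)ᴴ * (ρ k : Matrix (Fin d) (Fin d) ℂ) = 1 :=
      Matrix.mem_unitaryGroup_iff'.1 (ρ k).2
    -- reindex the right-hand sum by `h ↦ k * h`
    rw [← Equiv.sum_comp (Equiv.mulLeft k) fun h : G =>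
      (ρ h : Matrix (Fin d) (Fin d) ℂ)ᴴ * ((ρ k : Matrix (Fin d) (Fin d) ℂ) * A) *
        (ρ h : Matrix (Fin d) (Fin d) ℂ)]
    refine Finset.sum_congr rfl fun h _ => ?_
    simp only [Equiv.coe_mulLeft, map_mul, Submonoid.coe_mul, Matrix.conjTranspose_mul]
    calc _ = (ρ h : Matrix (Fin d) (Fin d) ℂ)ᴴ * 1 * A * (ρ k : Matrix (Fin d) (Fin d) ℂ) *
          (ρ h : Matrix (Fin d) (Fin d) ℂ) := by simp only [mul_one, mul_assoc]
      _ = _ := by rw [← hk]; simp only [mul_assoc]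

theorem twirl_conj {d : ℕ} {G : Type*} [Group G] [Fintype G]
    (ρ : G →* Matrix.unitaryGroup (Fin d) ℂ) (X w : Matrix (Fin d) (Fin d) ℂ)
    (hw : w ∈ Submodule.span ℂ (Set.range fun h : G => (ρ h : Matrix (Fin d) (Fin d) ℂ)))
    (hu : w ∈ Matrix.unitaryGroup (Fin d) ℂ) :
    twirl ρ (wᴴ * X * w) = twirl ρ X := by
  have h1 : w * wᴴ = 1 := Matrix.mem_unitaryGroup_iff.1 hu
  rw [twirl_mul_comm ρ _ w hw, ← mul_assoc, h1, one_mul]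

/-- A sum over the steps of an Eulerian cycle counts each pair (vertex, generator) `lam` times. -/
theorem sum_cycle {G E : Type*} [Group G] [Fintype G] [AddCommMonoid E]
    (S : Finset G) (lam N : ℕ) [NeZero N] (g : ZMod N → G)
    (hstep : ∀ j : ZMod N, g (j + 1) * (g j)⁻¹ ∈ S)
    (hcount : ∀ h : G, ∀ s ∈ S,
      Nat.card {j : ZMod N // g j = h ∧ g (j + 1) * (g j)⁻¹ = s} = lam)
    (F : G → G → E) :
    ∑ k ∈ Finset.range N,
        F (g ((k : ℕ) : ZMod N)) (g (((k : ℕ) : ZMod N) + 1) * (g ((k : ℕ) : ZMod N))⁻¹) =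
      lam • ∑ s ∈ S, ∑ h : G, F h s := by
  classical
  have h1 : ∑ k ∈ Finset.range N,
        F (g ((k : ℕ) : ZMod N)) (g (((k : ℕ) : ZMod N) + 1) * (g ((k : ℕ) : ZMod N))⁻¹) =
      ∑ j : ZMod N, F (g j) (g (j + 1) * (g j)⁻¹) := by
    refine Finset.sum_nbij' (fun k => (k : ZMod N)) ZMod.val ?_ ?_ ?_ ?_ ?_
    · simp
    · intro j _
      simpa using ZMod.val_lt j
    · intro k hk
      exact ZMod.val_natCast_of_lt (Finset.mem_range.1 hk)
    · intro j _
      exact ZMod.natCast_zmod_val j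
    · intro k _
      rfl
  rw [h1, ← Finset.sum_fiberwise_of_maps_to' (s := Finset.univ) (t := S ×ˢ Finset.univ)
    (g := fun j : ZMod N => (g (j + 1) * (g j)⁻¹, g j)) (by simp [hstep])
    (fun p => F p.2 p.1), Finset.sum_product, Finset.smul_sum]
  refine Finset.sum_congr rfl fun s hs => ?_
  rw [Finset.smul_sum]
  refine Finset.sum_congr rfl fun h _ => ?_
  rw [Finset.sum_const, ← hcount h s hs, Nat.card_eq_fintype_card, Fintype.card_subtype]
  congr 2
  ext j
  simp [and_comm]

/-- If `Φ` on `(kΔ, (k+1)Δ)` is the translate of a function `f k` continuous on `[0, Δ]`,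
and the `f k` with `k < N` add up to a constant `c`, then `Φ` integrates to `Δ • c` over `[0, NΔ]`.
The endpoints form a null set, so `Φ` is unconstrained there. The codomain is an abstract normed
space because on matrices the topology of the local norm agrees with the product topology only
after unfolding instances. -/
theorem integral_pieces {E : Type*} [NormedAddCommGroup E] [NormedSpace ℝ E] [CompleteSpace E]
    (N : ℕ) (Δ : ℝ) (hΔ : 0 < Δ) (Φ : ℝ → E) (f : ℕ → ℝ → E) (c : E)
    (hf : ∀ k < N, ContinuousOn (f k) (Set.Icc 0 Δ))
    (hpiece : ∀ k < N, ∀ δ ∈ Set.Ioo (0 : ℝ) Δ, f k δ = Φ ((k : ℝ) * Δ + δ))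
    (hconst : ∀ δ ∈ Set.Icc (0 : ℝ) Δ, ∑ k ∈ Finset.range N, f k δ = c) :
    ∫ τ in (0 : ℝ)..((N : ℝ) * Δ), Φ τ = Δ • c := by
  have hfint : ∀ k < N, IntervalIntegrable (f k) MeasureTheory.volume 0 Δ := by
    intro k hk
    refine ContinuousOn.intervalIntegrable ?_
    rw [Set.uIcc_of_le hΔ.le]
    exact hf k hk
  have hint : ∀ k < N, IntervalIntegrable Φ MeasureTheory.volume
      ((k : ℝ) * Δ) (((k + 1 : ℕ) : ℝ) * Δ) := by
    intro k hk
    have h1 := (hfint k hk).comp_sub_right ((k : ℝ) * Δ)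
    have e : ((k + 1 : ℕ) : ℝ) * Δ = Δ + (k : ℝ) * Δ := by push_cast; ring
    rw [zero_add, ← e] at h1
    refine h1.congr_uIoo fun τ hτ => ?_
    rw [e, Set.uIoo_of_le (by linarith)] at hτ
    have := hpiece k hk (τ - k * Δ) ⟨by linarith [hτ.1], by linarith [hτ.2]⟩
    rwa [add_sub_cancel] at this
  have hval : ∀ k < N, ∫ τ in ((k : ℝ) * Δ)..(((k + 1 : ℕ) : ℝ) * Δ), Φ τ =
      ∫ δ in (0 : ℝ)..Δ, f k δ := by
    intro k hk
    have h1 := intervalIntegral.integral_comp_add_left (a := 0) (b := Δ) Φ ((k : ℝ) * Δ)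
    have e : ((k + 1 : ℕ) : ℝ) * Δ = (k : ℝ) * Δ + Δ := by push_cast; ring
    rw [add_zero, ← e] at h1
    rw [← h1, intervalIntegral.integral_of_le hΔ.le, intervalIntegral.integral_of_le hΔ.le,
      MeasureTheory.integral_Ioc_eq_integral_Ioo, MeasureTheory.integral_Ioc_eq_integral_Ioo]
    exact MeasureTheory.setIntegral_congr_fun measurableSet_Ioo
      fun δ hδ => (hpiece k hk δ hδ).symm
  have h1 := intervalIntegral.sum_integral_adjacent_intervals
    (a := fun k : ℕ => (k : ℝ) * Δ) hint
  simp only [Nat.cast_zero, zero_mul] at h1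
  rw [← h1, Finset.sum_congr rfl fun k hk => hval k (Finset.mem_range.1 hk),
    ← intervalIntegral.integral_finsetSum fun k hk => hfint k (Finset.mem_range.1 hk),
    intervalIntegral.integral_congr (g := fun _ => c), intervalIntegral.integral_const, sub_zero]
  intro δ hδ
  rw [Set.uIcc_of_le hΔ.le] at hδ
  exact hconst δ hδ

/-- Eulerian decoupling (Viola–Knill): the time average of the controlled evolution
along an Eulerian cycle in the Cayley graph `Γ(G,S)` equals the group average. -/
theorem eulerian_decoupling
    (d : ℕ) (G : Type*) [Group G] [Fintype G]
    (ρ : G →* Matrix.unitaryGroup (Fin d) ℂ)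
    (S : Finset G) (hS : S.Nonempty)
    (lam N : ℕ) (hlam : 1 ≤ lam) (hN : N = lam * Fintype.card G * S.card)
    -- the Eulerian cycle of multiplicity `lam`, starting at the identity
    (g : ZMod N → G) (hg0 : g 0 = 1)
    (hstep : ∀ j : ZMod N, g (j + 1) * (g j)⁻¹ ∈ S)
    (hcount : ∀ h : G, ∀ s ∈ S,
      Nat.card {j : ZMod N // g j = h ∧ g (j + 1) * (g j)⁻¹ = s} = lam)
    -- the bounded-strength controls realizing the generators
    (Δ : ℝ) (hΔ : 0 < Δ)
    (u : G → ℝ → Matrix (Fin d) (Fin d) ℂ)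
    (hu_cont : ∀ s ∈ S, ContinuousOn (u s) (Set.Icc 0 Δ))
    (hu_unitary : ∀ s ∈ S, ∀ δ ∈ Set.Icc (0 : ℝ) Δ, u s δ ∈ Matrix.unitaryGroup (Fin d) ℂ)
    (hu_span : ∀ s ∈ S, ∀ δ ∈ Set.Icc (0 : ℝ) Δ,
      u s δ ∈ Submodule.span ℂ (Set.range fun h : G => (ρ h : Matrix (Fin d) (Fin d) ℂ)))
    (hu0 : ∀ s ∈ S, u s 0 = 1)
    (huΔ : ∀ s ∈ S, u s Δ = ρ s)
    -- the control propagator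
    (Uc : ℝ → Matrix (Fin d) (Fin d) ℂ)
    (hUc : ∀ j : Fin N, ∀ δ ∈ Set.Ico (0 : ℝ) Δ,
      Uc ((j : ℝ) * Δ + δ) =
        u (g (((j : ℕ) : ZMod N) + 1) * (g ((j : ℕ) : ZMod N))⁻¹) δ *
          (ρ (g ((j : ℕ) : ZMod N)) : Matrix (Fin d) (Fin d) ℂ))
    (X : Matrix (Fin d) (Fin d) ℂ) :
    (1 / ((N : ℝ) * Δ)) • ∫ τ in (0 : ℝ)..((N : ℝ) * Δ), (Uc τ)ᴴ * X * Uc τ =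
      (1 / (Fintype.card G : ℝ)) •
        ∑ h : G, (ρ h : Matrix (Fin d) (Fin d) ℂ)ᴴ * X * (ρ h : Matrix (Fin d) (Fin d) ℂ) := by
  classical
  have hG : 0 < Fintype.card G := Fintype.card_pos
  have hScard : 0 < S.card := hS.card_pos
  have hNpos : 0 < N := by rw [hN]; positivity
  have : NeZero N := ⟨hNpos.ne'⟩
  -- the integrand at time `δ` of a step that starts at `h` along the generator `s`
  let F : ℝ → G → G → Matrix (Fin d) (Fin d) ℂ := fun δ h s =>
    (u s δ * (ρ h : Matrix (Fin d) (Fin d) ℂ))ᴴ * X * (u s δ * (ρ h : Matrix (Fin d) (Fin d) ℂ))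
  have hFcont : ∀ h : G, ∀ s ∈ S, ContinuousOn (fun δ => F δ h s) (Set.Icc 0 Δ) := by
    intro h s hs
    have h1 : ContinuousOn (fun δ => u s δ * (ρ h : Matrix (Fin d) (Fin d) ℂ)) (Set.Icc 0 Δ) :=
      (hu_cont s hs).mul continuousOn_const
    have h2 : ContinuousOn (fun δ => (u s δ * (ρ h : Matrix (Fin d) (Fin d) ℂ))ᴴ)
        (Set.Icc 0 Δ) := h1.star
    exact (h2.mul continuousOn_const).mul h1
  -- a step of the cycle: its starting vertex and its generator
  let v : ℕ → G := fun k => g (k : ZMod N)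
  let t : ℕ → G := fun k => g ((k : ZMod N) + 1) * (g (k : ZMod N))⁻¹
  have hpiece : ∀ k < N, ∀ δ ∈ Set.Ioo (0 : ℝ) Δ,
      F δ (v k) (t k) = (Uc ((k : ℝ) * Δ + δ))ᴴ * X * Uc ((k : ℝ) * Δ + δ) := by
    intro k hk δ hδ
    have := hUc ⟨k, hk⟩ δ ⟨hδ.1.le, hδ.2⟩
    simp only at this
    rw [this]
  have hconst : ∀ δ ∈ Set.Icc (0 : ℝ) Δ, ∑ k ∈ Finset.range N, F δ (v k) (t k) =
      (lam * S.card) • twirl ρ X := by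
    intro δ hδ
    rw [sum_cycle S lam N g hstep hcount (F δ), mul_smul, ← Finset.sum_const]
    congr 1
    refine Finset.sum_congr rfl fun s hs => ?_
    rw [← twirl_conj ρ X _ (hu_span s hs δ hδ) (hu_unitary s hs δ hδ), twirl_apply]
    refine Finset.sum_congr rfl fun h _ => ?_
    simp only [F, Matrix.conjTranspose_mul, mul_assoc]
  have : CompleteSpace (Matrix (Fin d) (Fin d) ℂ) := FiniteDimensional.complete ℂ _
  rw [integral_pieces N Δ hΔ (fun τ => (Uc τ)ᴴ * X * Uc τ) (fun k δ => F δ (v k) (t k))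
    ((lam * S.card) • twirl ρ X) (fun k _ => hFcont (v k) (t k) (hstep _)) hpiece hconst,
    ← twirl_apply, ← Nat.cast_smul_eq_nsmul ℝ, smul_smul, smul_smul, hN]
  congr 1
  have h1 : (lam : ℝ) ≠ 0 := by positivity
  have h2 : (Fintype.card G : ℝ) ≠ 0 := by positivity
  have h3 : (S.card : ℝ) ≠ 0 := by positivity
  push_cast
  field_simp
end

section
/- (Orthogonal arrays from linear codes.) Let C be a linear [n,k]_q code with dual distance d^⊥, and let t be an integer with 1 ≤ t ≤ d^⊥ − 1. Then for every injective map κ : Fin t → Fin n and every v : Fin t → F_q, the number of codewords c ∈ C with c_{κ(i)} = v(i) for all i ∈ Fin t equals q^{k−t}. Equivalently, the array whose columns are the codewords of C is an orthogonal array with q^k columns, n rows, q levels, and strength d^⊥ − 1. -/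
/-! Let `P : C → F^t` be the restriction of codewords to the coordinates `κ 0, …, κ (t-1)`. If `P`
were not surjective, a nonzero linear functional `w ↦ ∑ a i * w i` would vanish on its range
(`proj_surjective`); placing `a i` at position `κ i` and zeros elsewhere gives a nonzero dual
codeword of weight at most `t < d⊥`, a contradiction. So `P` is surjective, its kernel has
dimension `k - t`, and each fibre, being a translate of the kernel, has `q^(k-t)` elements. -/

open scoped BigOperators

/-- Restriction of the codewords of `C` to the coordinates selected by `κ`. -/
def codeProj {F : Type*} [Field F] {n t : ℕ} (C : Submodule F (Fin n → F)) (κ : Fin t → Fin n) :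
    C →ₗ[F] (Fin t → F) :=
  (LinearMap.funLeft F F κ).comp C.subtype

/-- Any pattern on `t` coordinates is attained as soon as no nonzero dual codeword has weight at
most `t`. -/
theorem proj_surjective {F : Type*} [Field F] [DecidableEq F] {n t : ℕ}
    (C : Submodule F (Fin n → F))
    (hdual : ∀ x : Fin n → F, (∀ y ∈ C, ∑ i, x i * y i = 0) → x ≠ 0 → t < hammingNorm x)
    (κ : Fin t → Fin n) (hκ : Function.Injective κ) :
    Function.Surjective (codeProj C κ) := by
  rw [← LinearMap.range_eq_top]
  by_contra hne
  obtain ⟨f, hf0, hf⟩ := Submodule.exists_le_ker_of_lt_top _ (lt_top_iff_ne_top.mpr hne)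
  let a : Fin t → F := fun i => f (Pi.single i 1)
  have hfa : ∀ w, f w = ∑ i, a i * w i := by
    intro w
    rw [LinearMap.pi_apply_eq_sum_univ f w]
    refine Finset.sum_congr rfl fun i _ => ?_
    rw [smul_eq_mul, mul_comm]
    congr 2
    ext j
    simp [Pi.single_apply, eq_comm]
  -- the vector with entry `a i` at position `κ i` and zeros elsewhere
  let x : Fin n → F := fun j => ∑ i, if κ i = j then a i else 0
  have hxκ : ∀ i, x (κ i) = a i := by
    intro i
    simp [x, hκ.eq_iff]
  have hxdual : ∀ y ∈ C, ∑ j, x j * y j = 0 := by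
    intro y hy
    have h0 : f (codeProj C κ ⟨y, hy⟩) = 0 := hf ⟨_, rfl⟩
    rw [hfa] at h0
    rw [← h0]
    simp only [x, Finset.sum_mul]
    rw [Finset.sum_comm]
    refine Finset.sum_congr rfl fun i _ => ?_
    simp [codeProj, LinearMap.funLeft_apply]
  have hx0 : x ≠ 0 := by
    intro hx
    apply hf0
    refine LinearMap.ext fun w => ?_
    simp [hfa, ← hxκ, hx]
  have hwt : hammingNorm x ≤ t := by
    have hsub : (Finset.univ.filter fun j => x j ≠ 0) ⊆ Finset.univ.image κ := by
      intro j hj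
      obtain ⟨i, -, hi⟩ := Finset.exists_ne_zero_of_sum_ne_zero (Finset.mem_filter.mp hj).2
      exact Finset.mem_image.mpr ⟨i, Finset.mem_univ i, by by_contra h; simp [h] at hi⟩
    calc hammingNorm x ≤ (Finset.univ.image κ).card := Finset.card_le_card hsub
      _ ≤ t := Finset.card_image_le.trans (by simp)
  exact absurd (hdual x hxdual hx0) (not_lt.mpr hwt)

/-- Orthogonal arrays from linear codes: if a linear `[n,k]_q` code has dual
distance (at least) `d⊥` and `1 ≤ t ≤ d⊥ − 1`, then each pattern of values on
any `t` coordinates is attained by exactly `q^(k−t)` codewords; i.e., the array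
of all codewords is an `OA(q^k, n, q, d⊥ − 1)`. -/
theorem orthogonal_array_from_linear_code
    (F : Type*) [Field F] [Fintype F] [DecidableEq F]
    (n k t dperp : ℕ) (C : Submodule F (Fin n → F))
    (hk : Module.finrank F C = k)
    (hdual : ∀ x : Fin n → F, (∀ y ∈ C, ∑ i, x i * y i = 0) → x ≠ 0 →
      dperp ≤ hammingNorm x)
    (ht1 : 1 ≤ t) (ht2 : t + 1 ≤ dperp)
    (κ : Fin t → Fin n) (hκ : Function.Injective κ) (v : Fin t → F) :
    Nat.card {c : Fin n → F // c ∈ C ∧ ∀ i, c (κ i) = v i} =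
      Fintype.card F ^ (k - t) := by
  have hsurj := proj_surjective C (fun x hx hx0 => ht2.trans (hdual x hx hx0)) κ hκ
  obtain ⟨c₀, hc₀⟩ := hsurj v
  have hc₀' : ∀ i, (c₀ : Fin n → F) (κ i) = v i := fun i => congrFun hc₀ i
  -- translation by the codeword `c₀` identifies the kernel with the fibre over `v`
  let e : {c : Fin n → F // c ∈ C ∧ ∀ i, c (κ i) = v i} ≃ LinearMap.ker (codeProj C κ) :=
    { toFun := fun c => ⟨⟨c.1, c.2.1⟩ - c₀, by
        ext i
        simp [codeProj, LinearMap.funLeft_apply, c.2.2 i, hc₀' i]⟩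
      invFun := fun d => ⟨(d.1 + c₀ : C), (d.1 + c₀).2, fun i => by
        have hd : (d.1 : Fin n → F) (κ i) = 0 := congrFun (LinearMap.mem_ker.mp d.2) i
        simp [hd, hc₀' i]⟩
      left_inv := fun c => by simp
      right_inv := fun d => by ext; simp }
  have hrank := LinearMap.finrank_range_add_finrank_ker (codeProj C κ)
  rw [LinearMap.range_eq_top.mpr hsurj, finrank_top, Module.finrank_fin_fun, hk] at hrank
  rw [Nat.card_congr e, Module.natCard_eq_pow_finrank (K := F), Nat.card_eq_fintype_card]
  congr 1
  omega
end

section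
/- (Eulerian orthogonal arrays from linear codes: Eulerian property.) Let q be a prime power, C a linear [n,k]_q code with dual distance d^⊥, t an integer with 1 ≤ t ≤ d^⊥ − 1, and Γ an n×k matrix over F_q with {Γm : m ∈ F_q^k} = C and Γ injective as a linear map (a generator matrix of C). Let N = q^{2k} and let (m_j)_{j∈Z_N} be a sequence in F_q^k such that j ↦ (m_j, m_{j+1} − m_j) is a bijection from Z_N onto F_q^k × F_q^k (an Eulerian cycle of multiplicity 1 in the Cayley graph of F_q^k with generating set the whole group). Then for every injective map κ : Fin t → Fin n and all a, s : Fin t → F_q, exactly q^{2(k−t)} indices j ∈ Z_N satisfy ((Γ m_j)_{κ(i)})_{i} = a and ((Γ(m_{j+1} − m_j))_{κ(i)})_{i} = s. -/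
/-!
Let `L v = (Γ v) ∘ κ` be the linear map reading off the `t` selected coordinates of a codeword.
A functional vanishing on the range of `L` is a vector supported on the `t` positions `κ i` that
is orthogonal to `C`; its weight is at most `t`, less than the dual distance, so it is zero.  Hence
`L` is surjective (`mulVec_comp_surjective`) and each of its fibres is a coset of a kernel of
dimension `k - t` (`card_fiber_of_surjective`).  The Eulerian bijection turns the indices being
counted into pairs `(v, w)` with `L v = a` and `L w = s`, of which there are `(q ^ (k - t)) ^ 2`.
-/

open scoped BigOperators

/-- Any `t` coordinates of `C`, with `t` below the dual distance, take all values in `F ^ t`: a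
functional killing all projected codewords would extend by zero to a dual word of weight at
most `t`. -/
theorem mulVec_comp_surjective {F : Type*} [Field F] [DecidableEq F] {n k t dperp : ℕ}
    (C : Submodule F (Fin n → F))
    (hdual : ∀ x : Fin n → F, (∀ y ∈ C, ∑ i, x i * y i = 0) → x ≠ 0 →
      dperp ≤ hammingNorm x)
    (ht : t + 1 ≤ dperp) (Γ : Matrix (Fin n) (Fin k) F)
    (hΓ : Set.range Γ.mulVec = (C : Set (Fin n → F)))
    (κ : Fin t → Fin n) (hκ : Function.Injective κ) :
    Function.Surjective (LinearMap.funLeft F F κ ∘ₗ Γ.mulVecLin) := by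
  rw [← LinearMap.range_eq_top]
  by_contra hne
  obtain ⟨f, hf0, hf⟩ := Submodule.exists_le_ker_of_lt_top _ (lt_top_iff_ne_top.mpr hne)
  have hfe : ∀ v, f v = ∑ i, f (Pi.single i 1) * v i := fun v => by
    rw [LinearMap.pi_apply_eq_sum_univ f v]
    refine Finset.sum_congr rfl fun i _ => ?_
    rw [smul_eq_mul, mul_comm]
    congr 2
    ext j
    simp [Pi.single_apply, eq_comm]
  -- the coefficients of `f`, extended by zero to all `n` coordinates
  set x : Fin n → F := Function.extend κ (fun i => f (Pi.single i 1)) 0 with hx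
  have hxκ : ∀ i, x (κ i) = f (Pi.single i 1) := fun i => hκ.extend_apply _ _ i
  have hx0 : ∀ j, j ∉ Set.range κ → x j = 0 := fun j hj => by
    rw [hx, Function.extend_apply' _ _ _ (by simpa using hj)]; rfl
  have horth : ∀ y ∈ C, ∑ i, x i * y i = 0 := by
    intro y hy
    obtain ⟨v, rfl⟩ : y ∈ Set.range Γ.mulVec := hΓ ▸ hy
    have h := hf (LinearMap.mem_range_self (LinearMap.funLeft F F κ ∘ₗ Γ.mulVecLin) v)
    rw [LinearMap.mem_ker, hfe] at h
    rw [← h]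
    symm
    refine Fintype.sum_of_injective κ hκ _ _ (fun j hj => by rw [hx0 j hj, zero_mul]) fun i => ?_
    rw [hxκ]
    rfl
  have hxne : x ≠ 0 := by
    intro h0
    apply hf0
    ext v
    simp [← hxκ, h0]
  have hw : hammingNorm x ≤ t := by
    calc hammingNorm x ≤ (Finset.univ.image κ).card := by
          refine Finset.card_le_card fun j hj => ?_
          by_contra hj'
          exact (Finset.mem_filter.mp hj).2 (hx0 j (by simpa using hj'))
      _ ≤ t := Finset.card_image_le.trans (by simp)
  have := hdual x horth hxne
  omega

theorem card_fiber_of_surjective {F : Type*} [Field F] [Fintype F] {k t : ℕ}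
    (L : (Fin k → F) →ₗ[F] (Fin t → F)) (hL : Function.Surjective L) (a : Fin t → F) :
    Nat.card {v // L v = a} = Fintype.card F ^ (k - t) := by
  obtain ⟨v₀, rfl⟩ := hL a
  have e : {v // L v = L v₀} ≃ LinearMap.ker L :=
    (Equiv.subRight v₀).subtypeEquiv fun v => by simp [sub_eq_zero]
  have hr := L.finrank_range_add_finrank_ker
  rw [LinearMap.range_eq_top.mpr hL, finrank_top, Module.finrank_fin_fun,
    Module.finrank_fin_fun] at hr
  rw [Nat.card_congr e, Module.natCard_eq_pow_finrank (K := F), Nat.card_eq_fintype_card]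
  congr 1
  omega

/-- Eulerian orthogonal arrays from linear codes: the Eulerian property.
Following an Eulerian cycle of multiplicity 1 in the Cayley graph of `F_q^k`
(with the whole group as generating set) through a generator matrix of a code
with dual distance `> t` produces an array in which every (value, transition)
pair on any `t` rows occurs exactly `q^(2(k−t))` times. -/
theorem eulerian_orthogonal_array_from_linear_code_eulerian
    (F : Type*) [Field F] [Fintype F] [DecidableEq F]
    (n k t dperp N : ℕ)
    (C : Submodule F (Fin n → F))
    (hk : Module.finrank F C = k)
    (hdual : ∀ x : Fin n → F, (∀ y ∈ C, ∑ i, x i * y i = 0) → x ≠ 0 →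
      dperp ≤ hammingNorm x)
    (ht1 : 1 ≤ t) (ht2 : t + 1 ≤ dperp)
    (Γ : Matrix (Fin n) (Fin k) F)
    (hΓrange : Set.range Γ.mulVec = (C : Set (Fin n → F)))
    (hΓinj : Function.Injective Γ.mulVec)
    (hN : N = Fintype.card F ^ (2 * k))
    (m : ZMod N → (Fin k → F))
    (hEuler : Function.Bijective fun j : ZMod N => (m j, m (j + 1) - m j))
    (κ : Fin t → Fin n) (hκ : Function.Injective κ)
    (a s : Fin t → F) :
    Nat.card {j : ZMod N //
        (∀ i, Γ.mulVec (m j) (κ i) = a i) ∧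
        (∀ i, Γ.mulVec (m (j + 1) - m j) (κ i) = s i)} =
      Fintype.card F ^ (2 * (k - t)) := by
  set L := LinearMap.funLeft F F κ ∘ₗ Γ.mulVecLin with hLdef
  have hL : Function.Surjective L := mulVec_comp_surjective C hdual ht2 Γ hΓrange κ hκ
  have hLv : ∀ v b, L v = b ↔ ∀ i, Γ.mulVec v (κ i) = b i := fun v b => funext_iff
  have e : {j : ZMod N // (∀ i, Γ.mulVec (m j) (κ i) = a i) ∧
        (∀ i, Γ.mulVec (m (j + 1) - m j) (κ i) = s i)} ≃
      {p : (Fin k → F) × (Fin k → F) // L p.1 = a ∧ L p.2 = s} :=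
    (Equiv.ofBijective _ hEuler).subtypeEquiv fun j =>
      (and_congr (hLv _ _) (hLv _ _)).symm
  rw [Nat.card_congr (e.trans (Equiv.subtypeProdEquivProd (p := fun v => L v = a)
      (q := fun v => L v = s))), Nat.card_prod,
    card_fiber_of_surjective L hL, card_fiber_of_surjective L hL, ← pow_add, two_mul]
end

section
/- (Eulerian orthogonal arrays from linear codes: orthogonal array property.) Let q be a prime power, C a linear [n,k]_q code with dual distance d^⊥, t an integer with 1 ≤ t ≤ d^⊥ − 1, and Γ an n×k matrix over F_q with {Γm : m ∈ F_q^k} = C and Γ injective as a linear map (a generator matrix of C). Let N = q^{2k} and let (m_j)_{j∈Z_N} be a sequence in F_q^k such that j ↦ (m_j, m_{j+1} − m_j) is a bijection from Z_N onto F_q^k × F_q^k. Then the n×N matrix whose j-th column is Γ m_j is an orthogonal array of strength t with multiplicity q^{2k−t}: for every injective map κ : Fin t → Fin n and every v : Fin t → F_q, exactly q^{2k−t} indices j ∈ Z_N satisfy (Γ m_j)_{κ(i)} = v(i) for all i. -/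
/-!
Restrict the code to the `t` coordinates selected by `κ`. A linear relation `c` among the chosen
rows of `Γ` extends by zero to a dual codeword of weight at most `t < dperp`, which must vanish;
hence these rows are linearly independent and `u ↦ (Γ u) ∘ κ` is onto `F^t`
(`restriction_surjective`). Composing with the first projection `F^k × F^k → F^k` gives a
surjective linear map onto `F^t`, all of whose fibres have `q^{2k-t}` elements
(`card_fiber`). The Eulerian bijection `j ↦ (m j, m (j+1) - m j)` identifies the fibre over `v`
with the set of indices to be counted.
-/

open scoped BigOperators

/-- The fibres of a surjective linear map are translates of its kernel, whose dimension is given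
by rank-nullity. -/
lemma card_fiber {F V W : Type*} [Field F] [Fintype F] [AddCommGroup V] [Module F V]
    [FiniteDimensional F V] [AddCommGroup W] [Module F W]
    (T : V →ₗ[F] W) (hT : Function.Surjective T) (w : W) :
    Nat.card {x : V // T x = w} =
      Fintype.card F ^ (Module.finrank F V - Module.finrank F W) := by
  obtain ⟨x₀, hx₀⟩ := hT w
  have e : {x : V // T x = w} ≃ LinearMap.ker T :=
    (Equiv.subRight x₀).subtypeEquiv fun x => by
      simp [LinearMap.mem_ker, hx₀, sub_eq_zero]
  rw [Nat.card_congr e, Module.natCard_eq_pow_finrank (K := F), Nat.card_eq_fintype_card]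
  have h := T.finrank_range_add_finrank_ker
  rw [LinearMap.range_eq_top.2 hT, finrank_top] at h
  congr 1
  omega

/-- Any `t < dperp` coordinates of the code take all possible values. -/
lemma restriction_surjective {F : Type*} [Field F] [DecidableEq F] {n k t dperp : ℕ}
    (Γ : Matrix (Fin n) (Fin k) F)
    (hdual : ∀ x : Fin n → F, (∀ u, ∑ i, x i * Γ.mulVec u i = 0) → x ≠ 0 →
      dperp ≤ hammingNorm x)
    (ht : t < dperp) (κ : Fin t → Fin n) (hκ : Function.Injective κ) :
    Function.Surjective (Γ.submatrix κ id).mulVecLin := by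
  have hli : LinearIndependent F (Γ.submatrix κ id).row := by
    rw [← Matrix.vecMul_injective_iff]
    refine (injective_iff_map_eq_zero (Γ.submatrix κ id).vecMulLinear).2 fun c hc => ?_
    -- The extension of `c` by zero outside the range of `κ`.
    set x : Fin n → F := Function.extend κ c (fun _ => 0) with hx
    have hxκ : ∀ s, x (κ s) = c s := fun s => hκ.extend_apply c _ s
    have hx0 : ∀ i, i ∉ Set.range κ → x i = 0 := fun i hi =>
      Function.extend_apply' c _ i hi
    have horth : ∀ u, ∑ i, x i * Γ.mulVec u i = 0 := by
      intro u
      have h1 : ∑ s, c s * Γ.mulVec u (κ s) = ∑ i, x i * Γ.mulVec u i :=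
        Fintype.sum_of_injective κ hκ _ _ (fun i hi => by rw [hx0 i hi, zero_mul])
          (fun s => by rw [hxκ])
      rw [← h1]
      have h2 : c ⬝ᵥ (Γ.submatrix κ id).mulVec u = 0 := by
        rw [Matrix.dotProduct_mulVec]
        have hc' : Matrix.vecMul c (Γ.submatrix κ id) = 0 := hc
        rw [hc', zero_dotProduct]
      exact h2
    have hweight : hammingNorm x ≤ t := by
      calc hammingNorm x ≤ (Finset.univ.image κ).card := by
            refine Finset.card_le_card fun i hi => ?_
            by_contra h
            exact (Finset.mem_filter.1 hi).2 (hx0 i (by simpa using h))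
        _ ≤ t := Finset.card_image_le.trans (by simp)
    have hzero : x = 0 := by
      by_contra h
      have := hdual x horth h
      omega
    funext s
    rw [← hxκ, hzero]
    rfl
  rw [← LinearMap.range_eq_top]
  apply Submodule.eq_top_of_finrank_eq
  have h := hli.rank_matrix
  rw [Matrix.rank] at h
  simpa using h

/-- Eulerian orthogonal arrays from linear codes: the orthogonal array property.
The `n × q^{2k}` array whose `j`-th column is `Γ m_j`, for an Eulerian cycle
`(m_j)` of multiplicity 1 in the Cayley graph of `F_q^k` (with the whole group
as generating set), is an orthogonal array of strength `t` with multiplicity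
`q^{2k−t}`. -/
theorem eulerian_orthogonal_array_from_linear_code_oa
    (F : Type*) [Field F] [Fintype F] [DecidableEq F]
    (n k t dperp N : ℕ)
    (C : Submodule F (Fin n → F))
    (hk : Module.finrank F C = k)
    (hdual : ∀ x : Fin n → F, (∀ y ∈ C, ∑ i, x i * y i = 0) → x ≠ 0 →
      dperp ≤ hammingNorm x)
    (ht1 : 1 ≤ t) (ht2 : t + 1 ≤ dperp)
    (Γ : Matrix (Fin n) (Fin k) F)
    (hΓrange : Set.range Γ.mulVec = (C : Set (Fin n → F)))
    (hΓinj : Function.Injective Γ.mulVec)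
    (hN : N = Fintype.card F ^ (2 * k))
    (m : ZMod N → (Fin k → F))
    (hEuler : Function.Bijective fun j : ZMod N => (m j, m (j + 1) - m j))
    (κ : Fin t → Fin n) (hκ : Function.Injective κ)
    (v : Fin t → F) :
    Nat.card {j : ZMod N // ∀ i, Γ.mulVec (m j) (κ i) = v i} =
      Fintype.card F ^ (2 * k - t) := by
  have hsurj := restriction_surjective Γ
    (fun x hx => hdual x fun y hy => by
      rw [← SetLike.mem_coe, ← hΓrange] at hy
      obtain ⟨u, rfl⟩ := hy
      exact hx u) ht2 κ hκ
  set T : ((Fin k → F) × (Fin k → F)) →ₗ[F] (Fin t → F) :=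
    (Γ.submatrix κ id).mulVecLin ∘ₗ LinearMap.fst F _ _ with hT
  have hTs : Function.Surjective T := hsurj.comp Prod.fst_surjective
  have e : {j : ZMod N // ∀ i, Γ.mulVec (m j) (κ i) = v i} ≃ {p // T p = v} :=
    (Equiv.ofBijective _ hEuler).subtypeEquiv fun j => by
      rw [funext_iff]
      rfl
  rw [Nat.card_congr e, card_fiber T hTs v]
  simp [two_mul]
end

section
/- For every integer n ≥ 2 there exist N ≤ 12n + 4 with 16 dividing N and an n×N array M with entries in F_4 that is an orthogonal array of strength 2 with multiplicity N/16: for every pair of distinct rows k ≠ l and every (a,b) ∈ F_4 × F_4, exactly N/16 columns j satisfy (M_{kj}, M_{lj}) = (a,b). Consequently the number of columns (i.e., the number of bang-bang decoupling pulses for a pair-interaction Hamiltonian on n qubits) grows at most linearly in n. -/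
/-!
The array is the generator-type array of the Hamming construction. Let `K = F_4` and let `m` be the
least exponent for which the projective space of `K ^ m` has at least `n` points, that is,
`3 * n + 1 ≤ 4 ^ m`. Index the rows by representatives `v_k` of `n` distinct projective points and
the columns by the linear functionals `f` on `K ^ m`, with entry `f v_k`. Two distinct rows
correspond to linearly independent vectors `u`, `w`, so `f ↦ (f u, f w)` is a surjective additive
homomorphism onto `K × K` (`exists_dual_pair`) and all of its `16` fibres have the same size
(`card_dual_pair`). Minimality of `m` gives `4 ^ (m - 1) < 3 * n + 1`, hence
`N = 4 ^ m ≤ 12 * n`.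

The inequality `N ≤ 12 * n + 4` alone would also allow the empty array `N = 0`; the array
built in `exists_pos_oa` is a genuine one, with `0 < N`.
-/

/-- Linearly independent `u`, `w` can be sent to arbitrary scalars by a functional. -/
lemma exists_dual_pair {K V : Type*} [Field K] [AddCommGroup V] [Module K V] {u w : V}
    (h : LinearIndependent K ![u, w]) (a b : K) :
    ∃ f : Module.Dual K V, f u = a ∧ f w = b := by
  obtain ⟨f, hf⟩ := LinearMap.exists_extend
    ((Finsupp.linearCombination K ![a, b]).comp h.repr)
  have mem : ∀ i, ![u, w] i ∈ Submodule.span K (Set.range ![u, w]) :=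
    fun i => Submodule.subset_span ⟨i, rfl⟩
  have key : ∀ i, f (![u, w] i) = ![a, b] i := by
    intro i
    have h1 := LinearMap.congr_fun hf ⟨![u, w] i, mem i⟩
    have h2 := h.repr_eq_single i ⟨![u, w] i, mem i⟩ rfl
    simpa [h2] using h1
  exact ⟨f, by simpa using key 0, by simpa using key 1⟩

/-- The evaluation pair `f ↦ (f u, f w)` is equidistributed on `K × K` when `u`, `w` are
linearly independent. -/
lemma card_dual_pair {K V : Type*} [Field K] [Finite K] [AddCommGroup V] [Module K V]
    [Finite (Module.Dual K V)] {u w : V} (h : LinearIndependent K ![u, w]) (a b : K) :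
    Nat.card K ^ 2 * Nat.card {f : Module.Dual K V // f u = a ∧ f w = b}
      = Nat.card (Module.Dual K V) := by
  -- Translation by a functional with values `(c, d)` identifies the fibres over `(0, 0)`, `(c, d)`.
  have fibre : ∀ c d : K, Nat.card {f : Module.Dual K V // f u = c ∧ f w = d}
      = Nat.card {f : Module.Dual K V // f u = 0 ∧ f w = 0} := by
    intro c d
    obtain ⟨g, rfl, rfl⟩ := exists_dual_pair h c d
    refine Nat.card_congr ((Equiv.subRight g).subtypeEquiv fun f => ?_)
    simp [sub_eq_zero]
  have e : Nat.card (Module.Dual K V)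
      = Nat.card (Σ p : K × K, {f : Module.Dual K V // (f u, f w) = p}) :=
    Nat.card_congr (Equiv.sigmaFiberEquiv fun f : Module.Dual K V => (f u, f w)).symm
  have := Fintype.ofFinite K
  rw [e, Nat.card_sigma]
  simp only [Prod.ext_iff, fibre, Finset.sum_const, Finset.card_univ, Fintype.card_prod,
    Nat.card_eq_fintype_card (α := K), smul_eq_mul]
  ring

/-- The strength-two array of the construction, with a positive number of columns. -/
lemma exists_pos_oa (n : ℕ) (hn : 2 ≤ n) :
    ∃ N : ℕ, 0 < N ∧ N ≤ 12 * n + 4 ∧ 16 ∣ N ∧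
      ∃ M : Fin n → Fin N → GaloisField 2 2,
        ∀ k l : Fin n, k ≠ l →
          ∀ a b : GaloisField 2 2,
            Nat.card {j : Fin N // M k j = a ∧ M l j = b} = N / 16 := by
  have ex : ∃ m, 3 * n + 1 ≤ 4 ^ m :=
    ⟨3 * n + 1, (Nat.lt_pow_self (by norm_num)).le⟩
  obtain ⟨m, hm, hmin⟩ : ∃ m, 3 * n + 1 ≤ 4 ^ m ∧ ∀ k < m, 4 ^ k < 3 * n + 1 := by
    classical
    exact ⟨Nat.find ex, Nat.find_spec ex, fun k hk => not_le.1 (Nat.find_min ex hk)⟩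
  have hm2 : 2 ≤ m := by
    by_contra! hlt
    interval_cases m <;> omega
  obtain ⟨r, rfl⟩ := Nat.exists_eq_add_of_le hm2
  have hle : 4 ^ (1 + r) < 3 * n + 1 := hmin _ (by omega)
  have hK : Nat.card (GaloisField 2 2) = 4 := by
    rw [GaloisField.card 2 2 (by norm_num)]; norm_num
  have hN : 4 ^ (2 + r) = 16 * 4 ^ r := by ring
  have hN' : 4 ^ (1 + r) = 4 * 4 ^ r := by ring
  let V := Fin (2 + r) → GaloisField 2 2
  have hV : Nat.card V = 4 ^ (2 + r) := by
    rw [Nat.card_fun, hK, Nat.card_fin]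
  have hfin : Finite (Module.Dual (GaloisField 2 2) V) :=
    Finite.of_injective _ DFunLike.coe_injective
  have hD : Nat.card (Module.Dual (GaloisField 2 2) V) = 4 ^ (2 + r) := by
    rw [← hV]
    exact Nat.card_congr
      (Pi.basisFun (GaloisField 2 2) (Fin (2 + r))).toDualEquiv.symm.toEquiv
  have hP : n ≤ Nat.card (Projectivization (GaloisField 2 2) V) := by
    have := Projectivization.card (GaloisField 2 2) V
    rw [hV, hK] at this
    omega
  have hPfin : Finite (Projectivization (GaloisField 2 2) V) := Nat.finite_of_card_ne_zero (by omega)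
  let p : Fin n → Projectivization (GaloisField 2 2) V := fun k => (Finite.equivFin _).symm (Fin.castLE hP k)
  have hp : Function.Injective p :=
    (Finite.equivFin _).symm.injective.comp (Fin.castLE_injective hP)
  let e : Fin (4 ^ (2 + r)) ≃ Module.Dual (GaloisField 2 2) V :=
    (Finite.equivFinOfCardEq hD).symm
  refine ⟨4 ^ (2 + r), by positivity, by omega, ⟨_, hN⟩, fun k j => e j (p k).rep, ?_⟩
  intro k l hkl a b
  have hind : LinearIndependent (GaloisField 2 2) ![(p k).rep, (p l).rep] :=
    Projectivization.linearIndependent_pair_iff_ne.2 (hp.ne hkl)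
  have hc := card_dual_pair hind a b
  rw [hK, hD] at hc
  rw [Nat.card_congr (e.subtypeEquiv (q := fun f => f (p k).rep = a ∧ f (p l).rep = b)
    fun _ => Iff.rfl)]
  omega

/-- For every `n ≥ 2` there is an orthogonal array of strength 2 over `F_4` with
`n` rows and `N ≤ 12n + 4` columns (with `16 ∣ N` and multiplicity `N/16`); hence
the number of bang-bang decoupling pulses for a pair-interaction Hamiltonian on
`n` qubits grows at most linearly in `n`. -/
theorem exists_linear_size_oa_strength_two (n : ℕ) (hn : 2 ≤ n) :
    ∃ N : ℕ, N ≤ 12 * n + 4 ∧ 16 ∣ N ∧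
      ∃ M : Fin n → Fin N → GaloisField 2 2,
        ∀ k l : Fin n, k ≠ l →
          ∀ a b : GaloisField 2 2,
            Nat.card {j : Fin N // M k j = a ∧ M l j = b} = N / 16 := by
  obtain ⟨N, -, h⟩ := exists_pos_oa n hn
  exact ⟨N, h⟩
end
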